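/- Let P be a polytope in ℝ^k with vertices in ℚ_{≥0}^k, let m ∈ ℕ be such that the vertices of mP lie in ℕ₀^k, and let χ : ℕ₀^k → X be an additive coloring. Then there exist a constant N and polynomials p₀, p₁, …, p_{m−1} such that for all integers n ≥ N, if n ≡ r (mod m) with 0 ≤ r < m, then the number of colors |χ(nP ∩ ℕ₀^k)| equals p_r(n); i.e., |χ(nP ∩ ℕ₀^k)| is for large n given by a quasipolynomial with period m. -/

import Mathlib

open Pointwise
def EvPoly (f : ℕ → ℚ) : Prop := ∃ (p : Polynomial ℚ) (N : ℕ), ∀ n, N ≤ n → f n = p.eval (n : ℚ)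

lemma EvPoly.zero : EvPoly (fun _ => 0) := ⟨0, 0, by simp⟩

lemma EvPoly.add {f g : ℕ → ℚ} (hf : EvPoly f) (hg : EvPoly g) : EvPoly (fun n => f n + g n) := by
  obtain ⟨p, N, h⟩ := hf
  obtain ⟨q, M, h'⟩ := hg
  refine ⟨p + q, max N M, fun n hn => ?_⟩
  simp [h n (le_trans (le_max_left _ _) hn), h' n (le_trans (le_max_right _ _) hn)]

lemma EvPoly.sum {ι : Type*} (s : Finset ι) {f : ι → ℕ → ℚ} (hf : ∀ i ∈ s, EvPoly (f i)) :
    EvPoly (fun n => ∑ i ∈ s, f i n) := by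
  classical
  induction s using Finset.induction_on with
  | empty => simpa using EvPoly.zero
  | insert a s ha ih =>
    simp only [Finset.sum_insert ha]
    exact (hf a (by simp)).add (ih fun i hi => hf i (by simp [hi]))

lemma EvPoly.congr {f g : ℕ → ℚ} (hf : EvPoly f) (M : ℕ) (h : ∀ n, M ≤ n → g n = f n) :
    EvPoly g := by
  obtain ⟨p, N, hp⟩ := hf
  exact ⟨p, max N M, fun n hn => by
    rw [h n (le_trans (le_max_right _ _) hn), hp n (le_trans (le_max_left _ _) hn)]⟩

lemma EvPoly.shift {f : ℕ → ℚ} (hf : EvPoly f) (T : ℕ) : EvPoly (fun n => f (n - T)) := by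
  obtain ⟨p, N, hp⟩ := hf
  refine ⟨p.comp (Polynomial.X - Polynomial.C (T : ℚ)), N + T, fun n hn => ?_⟩
  show f (n - T) = _
  rw [hp _ (by omega), Nat.cast_sub (by omega)]
  simp

lemma EvPoly.shift' {f : ℕ → ℚ} (T : ℕ) (hf : EvPoly (fun n => f (n + T))) : EvPoly f :=
  (hf.shift T).congr T fun n hn => by simp [Nat.sub_add_cancel hn]

lemma poly_sum (p : Polynomial ℚ) : ∃ P : Polynomial ℚ, ∀ n : ℕ,
    ∑ i ∈ Finset.range n, p.eval (i : ℚ) = P.eval (n : ℚ) := by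
  induction p using Polynomial.induction_on' with
  | add p q hp hq =>
    obtain ⟨P, hP⟩ := hp
    obtain ⟨Q, hQ⟩ := hq
    exact ⟨P + Q, fun n => by simp [Finset.sum_add_distrib, hP, hQ]⟩
  | monomial d a =>
    refine ⟨Polynomial.C a * ∑ i ∈ Finset.range (d + 1), Polynomial.C (bernoulli i * ((d + 1).choose i) / (d + 1)) * Polynomial.X ^ (d + 1 - i), fun n => ?_⟩
    simp only [Polynomial.eval_monomial, ← Finset.mul_sum, sum_range_pow]
    simp only [Polynomial.eval_mul, Polynomial.eval_C, Polynomial.eval_finsetSum, Polynomial.eval_pow, Polynomial.eval_X]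
    congr 1
    exact Finset.sum_congr rfl fun i _ => by ring

lemma EvPoly.psum {f : ℕ → ℚ} (hf : EvPoly f) : EvPoly (fun n => ∑ i ∈ Finset.range n, f i) := by
  obtain ⟨p, N, hp⟩ := hf
  obtain ⟨P, hP⟩ := poly_sum p
  refine ⟨P + Polynomial.C (∑ i ∈ Finset.range N, (f i - p.eval (i : ℚ))), N, fun n hn => ?_⟩
  have : ∑ i ∈ Finset.range n, (f i - p.eval (i : ℚ)) = ∑ i ∈ Finset.range N, (f i - p.eval (i : ℚ)) := by
    symm
    apply Finset.sum_subset (by simpa using hn)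
    intro x _ hx
    rw [hp x (by simpa using hx), sub_self]
  rw [Polynomial.eval_add, Polynomial.eval_C, ← this, ← hP, Finset.sum_sub_distrib]
  ring

open Classical in
noncomputable def cnt {s : ℕ} (L : Set (Fin s → ℕ)) (q : ℕ) : ℕ :=
  ((Finset.Nat.antidiagonalTuple s q).filter (· ∈ L)).card

def slice {s : ℕ} (L : Set (Fin (s+1) → ℕ)) (t : ℕ) : Set (Fin s → ℕ) :=
  {u | (Fin.cons t u : Fin (s+1) → ℕ) ∈ L}

lemma cnt_succ {s : ℕ} (L : Set (Fin (s+1) → ℕ)) (q : ℕ) :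
    cnt L q = ∑ t ∈ Finset.range (q+1), cnt (slice L t) (q - t) := by
  classical
  unfold cnt
  rw [Finset.card_eq_sum_card_fiberwise (f := fun u => u 0) (t := Finset.range (q+1))]
  · refine Finset.sum_congr rfl fun t ht => ?_
    symm
    apply Finset.card_bij (fun (u : Fin s → ℕ) _ => (Fin.cons t u : Fin (s+1) → ℕ))
    · intro u hu
      simp only [Finset.mem_filter, Finset.Nat.mem_antidiagonalTuple, slice, Set.mem_setOf_eq, Finset.mem_range] at *
      refine ⟨⟨?_, hu.2⟩, by simp⟩
      simp [Fin.sum_univ_succ, hu.1]; omega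
    · intro u _ v _ h
      exact Fin.cons_right_injective (α := fun _ => ℕ) t h
    · intro u hu
      simp only [Finset.mem_filter, Finset.Nat.mem_antidiagonalTuple, slice, Set.mem_setOf_eq, Finset.mem_range] at *
      obtain ⟨⟨h1, h2⟩, h3⟩ := hu
      have hc : (Fin.cons t (Fin.tail u) : Fin (s+1) → ℕ) = u := by rw [← h3]; simp
      refine ⟨Fin.tail u, ⟨?_, by rwa [hc]⟩, hc⟩
      rw [Fin.sum_univ_succ, h3] at h1
      simp only [Fin.tail]; omega
  · intro u hu
    simp only [Finset.coe_filter, Finset.Nat.mem_antidiagonalTuple, Set.mem_setOf_eq, Finset.coe_range, Set.mem_Iio] at *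
    have := Finset.single_le_sum (f := u) (fun _ _ => Nat.zero_le _) (Finset.mem_univ 0)
    omega

lemma stab {s : ℕ} (L : ℕ → Set (Fin s → ℕ)) (hL : ∀ t, IsLowerSet (L t)) (ha : Antitone L) :
    ∃ T, ∀ t, T ≤ t → L t = L T := by
  by_contra! hcon
  have h1 : ∀ T, ∃ t x, T < t ∧ x ∈ L T ∧ x ∉ L t := by
    intro T
    obtain ⟨t, ht, hne⟩ := hcon T
    have hs := ha ht
    have : ¬ L T ⊆ L t := fun h => hne (Set.Subset.antisymm hs h)
    obtain ⟨x, hx, hx'⟩ := Set.not_subset.1 this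
    refine ⟨t, x, lt_of_le_of_ne ht ?_, hx, hx'⟩
    rintro rfl; exact hx' hx
  choose nx x hlt hx hx' using h1
  let τ : ℕ → ℕ := fun i => nx^[i] 0
  have hτ : ∀ i, τ (i+1) = nx (τ i) := fun i => Function.iterate_succ_apply' _ _ _
  have hm : StrictMono τ := strictMono_nat_of_lt_succ fun i => by rw [hτ]; exact hlt _
  obtain ⟨i, j, hij, hle⟩ := wellQuasiOrdered_le (fun i => x (τ i))
  have h2 : x (τ j) ∈ L (τ (i+1)) := ha (hm.monotone hij) (hx _)
  have h3 := hL _ hle h2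
  rw [hτ] at h3
  exact hx' _ h3

lemma cnt_evPoly : ∀ {s : ℕ} (L : Set (Fin s → ℕ)), IsLowerSet L → EvPoly (fun q => (cnt L q : ℚ))
  | 0, L, _ => by
    refine ⟨0, 1, fun n hn => ?_⟩
    obtain ⟨n, rfl⟩ : ∃ k, n = k + 1 := ⟨n - 1, by omega⟩
    simp [cnt]
  | s+1, L, hL => by
    have hsl : ∀ t, IsLowerSet (slice L t) := by
      intro t a b hab h
      refine hL ?_ h
      intro i
      refine Fin.cases ?_ (fun i => ?_) i
      · simp
      · simpa using hab i
    have han : Antitone (slice L) := by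
      intro t t' htt u hu
      refine hL ?_ hu
      intro i
      refine Fin.cases ?_ (fun i => ?_) i
      · simpa using htt
      · simp
    obtain ⟨T, hT⟩ := stab _ hsl han
    have e2 := (cnt_evPoly _ (hsl T)).psum
    apply EvPoly.shift' T
    have e3 : EvPoly (fun q => ∑ t ∈ Finset.range (q+1), (cnt (slice L T) t : ℚ)) := by
      refine EvPoly.congr (e2.add (cnt_evPoly _ (hsl T))) 0 fun n _ => ?_
      rw [Finset.sum_range_succ]
    have e4 : EvPoly (fun q => ∑ t ∈ Finset.range T, (cnt (slice L t) (q + T - t) : ℚ)) := by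
      refine EvPoly.sum _ fun t ht => ?_
      obtain ⟨p, N, hp⟩ := cnt_evPoly _ (hsl t)
      refine ⟨p.comp (Polynomial.X + Polynomial.C ((T - t : ℕ) : ℚ)), N, fun n hn => ?_⟩
      have : t < T := by simpa using ht
      have h := hp (n + (T - t)) (by omega)
      simp only at h ⊢
      rw [show n + T - t = n + (T - t) by omega, h]
      simp
    refine EvPoly.congr (e4.add e3) 0 fun q _ => ?_
    rw [cnt_succ, show q + T + 1 = T + (q + 1) by ring, Finset.sum_range_add]
    push_cast
    congr 1
    rw [← Finset.sum_range_reflect]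
    refine Finset.sum_congr rfl fun t ht => ?_
    have : t < q + 1 := by simpa using ht
    rw [hT _ (by omega)]
    congr 2
    omega

/-- Counting values of a translation compatible map. -/
lemma image_evPoly {s t : ℕ} {X : Type*} (g : (Fin s → ℕ) → Fin t → X)
    (hg : ∀ u b u' b' e, g u b = g u' b' → g (u + e) b = g (u' + e) b') :
    EvPoly (fun q => (({x | ∃ u b, ∑ i, u i = q ∧ g u b = x} : Set X).ncard : ℚ)) := by
  classical
  let o : (Fin s → ℕ) → Fin t → Lex (Lex (Fin s → ℕ) × Fin t) := fun u b => toLex (toLex u, b)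
  let L : Fin t → Set (Fin s → ℕ) := fun b =>
    {u | ∀ u' b', ∑ i, u' i = ∑ i, u i → g u' b' = g u b → o u b ≤ o u' b'}
  have ho : ∀ u b u' b' e, o (u + e) b ≤ o (u' + e) b' → o u b ≤ o u' b' := by
    intro u b u' b' e h
    simp only [o, Prod.Lex.toLex_le_toLex, toLex_add] at h ⊢
    simpa using h
  have hL : ∀ b, IsLowerSet (L b) := by
    intro b a c hca ha u' b' h1 h2
    obtain ⟨e, rfl⟩ : ∃ e, a = c + e := ⟨a - c, by
      ext i; have : c i ≤ a i := hca i; simp; omega⟩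
    apply ho _ _ _ _ e
    apply ha
    · simp [Finset.sum_add_distrib, h1]
    · exact hg _ _ _ _ _ h2
  refine EvPoly.congr (EvPoly.sum Finset.univ fun b _ => cnt_evPoly (L b) (hL b)) 0 fun q _ => ?_
  norm_cast
  let F : Finset (Σ _ : Fin t, (Fin s → ℕ)) := Finset.univ.sigma fun b =>
    (Finset.Nat.antidiagonalTuple s q).filter (· ∈ L b)
  have hF : ∑ b, cnt (L b) q = F.card := by
    simp only [F, Finset.card_sigma, cnt]
  have hmem : ∀ z, z ∈ F ↔ ∑ i, z.2 i = q ∧ z.2 ∈ L z.1 := by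
    intro z; simp [F, Finset.Nat.mem_antidiagonalTuple]
  have him : ({x | ∃ u b, ∑ i, u i = q ∧ g u b = x} : Set X) = (F.image fun z => g z.2 z.1 : Finset X) := by
    ext x
    simp only [Set.mem_setOf_eq, Finset.coe_image, Set.mem_image, Finset.mem_coe, hmem]
    constructor
    · rintro ⟨u, b, hu, hx⟩
      let G : Finset (Σ _ : Fin t, (Fin s → ℕ)) := (Finset.univ.sigma fun b =>
        (Finset.Nat.antidiagonalTuple s q)).filter fun z => g z.2 z.1 = x
      have hG : ∀ z, z ∈ G ↔ ∑ i, z.2 i = q ∧ g z.2 z.1 = x := by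
        intro z; simp [G, Finset.Nat.mem_antidiagonalTuple]
      obtain ⟨z, hz, hmin⟩ := G.exists_min_image (fun z => o z.2 z.1) ⟨⟨b, u⟩, (hG _).2 ⟨hu, hx⟩⟩
      rw [hG] at hz
      refine ⟨z, ⟨hz.1, ?_⟩, hz.2⟩
      intro u' b' h1 h2
      exact hmin ⟨b', u'⟩ ((hG _).2 ⟨h1.trans hz.1, h2.trans hz.2⟩)
    · rintro ⟨z, hz, hx⟩
      exact ⟨z.2, z.1, hz.1, hx⟩
  rw [hF, him, Set.ncard_coe_finset, Finset.card_image_of_injOn]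
  intro z hz z' hz' h
  simp only [Finset.mem_coe, hmem] at hz hz'
  have h1 := hz.2 _ _ (hz'.1.trans hz.1.symm) h.symm
  have h2 := hz'.2 _ _ (hz.1.trans hz'.1.symm) h
  have h3 := le_antisymm h1 h2
  simp only [o, toLex_inj, Prod.mk.injEq] at h3
  obtain ⟨b, u⟩ := z
  obtain ⟨b', u'⟩ := z'
  obtain ⟨rfl, rfl⟩ := h3
  rfl

lemma mem_dilate_iff {k s : ℕ} (V : Finset (Fin k → ℝ)) (e : Fin s ≃ V) (n : ℕ) (hn : 0 < n)
    (x : Fin k → ℝ) :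
    x ∈ (n : ℝ) • convexHull ℝ (V : Set (Fin k → ℝ)) ↔
      ∃ μ : Fin s → ℝ, (∀ j, 0 ≤ μ j) ∧ ∑ j, μ j = n ∧
        ∀ i, x i = ∑ j, μ j * (e j : Fin k → ℝ) i := by
  have hn' : (0 : ℝ) < n := by exact_mod_cast hn
  rw [Set.mem_smul_set]
  constructor
  · rintro ⟨y, hy, rfl⟩
    rw [Finset.mem_convexHull'] at hy
    obtain ⟨w, hw, hw1, hwy⟩ := hy
    refine ⟨fun j => n * w (e j), fun j => mul_nonneg hn'.le (hw _ (e j).2), ?_, fun i => ?_⟩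
    · rw [← Finset.mul_sum, Equiv.sum_comp e (fun v : V => w v), Finset.sum_coe_sort V w, hw1, mul_one]
    · simp only [mul_assoc]
      rw [← Finset.mul_sum, Equiv.sum_comp e (fun v : V => w v * (v : Fin k → ℝ) i),
        Finset.sum_coe_sort V (fun v => w v * v i), ← hwy]
      simp
  · rintro ⟨μ, h0, h1, hx⟩
    refine ⟨∑ j, (μ j / n) • (e j : Fin k → ℝ), ?_, ?_⟩
    · refine (convex_convexHull ℝ _).sum_mem (fun j _ => div_nonneg (h0 j) hn'.le) ?_ fun j _ => subset_convexHull ℝ _ (e j).2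
      rw [← Finset.sum_div, h1, div_self hn'.ne']
    · ext i
      rw [hx]
      simp only [Pi.smul_apply, Finset.sum_apply, smul_eq_mul, Finset.mul_sum]
      refine Finset.sum_congr rfl fun j _ => ?_
      field_simp

lemma residue_evPoly
    {k : ℕ} {X : Type*} (V : Finset (Fin k → ℝ)) (hVne : V.Nonempty)
    (m : ℕ) (hm : 0 < m)
    (hmV : ∀ v ∈ V, ∀ i, ∃ t : ℕ, (m : ℝ) * v i = (t : ℝ))
    (χ : (Fin k → ℕ) → X)
    (hχ : ∀ a b c d : Fin k → ℕ, χ a = χ c → χ b = χ d → χ (a + b) = χ (c + d)) (r : ℕ) :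
    EvPoly (fun q => ((χ '' {a : Fin k → ℕ | (fun i => (a i : ℝ)) ∈
      ((r + m * V.card + m * q : ℕ) : ℝ) • convexHull ℝ (V : Set (Fin k → ℝ))}).ncard : ℚ)) := by
  classical
  have hs : 0 < V.card := hVne.card_pos
  set s := V.card with hs_def
  let e : Fin s ≃ V := V.equivFin.symm
  have hm' : (0 : ℝ) < m := by exact_mod_cast hm
  have hw : ∀ j : Fin s, ∃ w : Fin k → ℕ, ∀ i, (m : ℝ) * (e j : Fin k → ℝ) i = w i := by
    intro j
    choose w hw using hmV _ (e j).2
    exact ⟨w, hw⟩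
  choose w hw using hw
  have hv0 : ∀ j i, 0 ≤ (e j : Fin k → ℝ) i := by
    intro j i
    have h : 0 ≤ (m : ℝ) * (e j : Fin k → ℝ) i := by rw [hw]; positivity
    exact nonneg_of_mul_nonneg_right h hm'
  let n0 := r + m * s
  have hn0 : 0 < n0 := by have := Nat.mul_pos hm hs; omega
  let A : ℕ → Set (Fin k → ℕ) := fun n => {a | ∃ μ : Fin s → ℝ, (∀ j, 0 ≤ μ j) ∧ ∑ j, μ j = n ∧
        ∀ i, (a i : ℝ) = ∑ j, μ j * (e j : Fin k → ℝ) i}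
  have hA : ∀ n : ℕ, 0 < n → {a : Fin k → ℕ | (fun i => (a i : ℝ)) ∈
      (n : ℝ) • convexHull ℝ (V : Set (Fin k → ℝ))} = A n := by
    intro n hn
    ext a
    exact mem_dilate_iff V e n hn _
  have hfin : (A n0).Finite := by
    apply (Set.finite_Iic (fun i => ⌈∑ j, (n0 : ℝ) * (e j : Fin k → ℝ) i⌉₊)).subset
    rintro a ⟨μ, h0, h1, ha⟩ i
    have : (a i : ℝ) ≤ ∑ j, (n0 : ℝ) * (e j : Fin k → ℝ) i := by
      rw [ha]
      refine Finset.sum_le_sum fun j _ => mul_le_mul_of_nonneg_right ?_ (hv0 j i)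
      rw [← h1]
      exact Finset.single_le_sum (fun j _ => h0 j) (Finset.mem_univ j)
    exact_mod_cast this.trans (Nat.le_ceil _)
  have hup : ∀ n a j, a ∈ A n → w j + a ∈ A (n + m) := by
    rintro n a j ⟨μ, h0, h1, ha⟩
    refine ⟨fun l => μ l + if l = j then (m : ℝ) else 0, fun l => ?_, ?_, fun i => ?_⟩
    · have := h0 l
      positivity
    · simp [Finset.sum_add_distrib, h1]
    · simp [add_mul, Finset.sum_add_distrib, ← ha, hw, add_comm]
  have hdown : ∀ n a, n0 ≤ n → a ∈ A (n + m) → ∃ j, ∃ a' ∈ A n, a = w j + a' := by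
    rintro n a hn ⟨μ, h0, h1, ha⟩
    obtain ⟨j, hj⟩ : ∃ j, (m : ℝ) ≤ μ j := by
      by_contra! hcon
      have h2 : ∑ j, μ j ≤ ∑ j : Fin s, (m : ℝ) := Finset.sum_le_sum fun j _ => (hcon j).le
      rw [h1] at h2
      simp only [Finset.sum_const, Finset.card_univ, Fintype.card_fin, nsmul_eq_mul] at h2
      have h3 : n + m ≤ s * m := by exact_mod_cast h2
      have h4 : r + m * s ≤ n := hn
      rw [mul_comm] at h3
      omega
    let ν : Fin s → ℝ := fun l => μ l - if l = j then (m : ℝ) else 0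
    have hν0 : ∀ l, 0 ≤ ν l := by
      intro l
      by_cases h : l = j
      · subst h; simpa [ν] using hj
      · simpa [ν, h] using h0 l
    have hν : ∀ i, (a i : ℝ) - w j i = ∑ l, ν l * (e l : Fin k → ℝ) i := by
      intro i
      simp [ν, sub_mul, Finset.sum_sub_distrib, ← ha, hw]
    have hle : ∀ i, w j i ≤ a i := by
      intro i
      have : (0 : ℝ) ≤ (a i : ℝ) - w j i := by
        rw [hν]
        exact Finset.sum_nonneg fun l _ => mul_nonneg (hν0 l) (hv0 l i)
      exact_mod_cast sub_nonneg.1 this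
    refine ⟨j, fun i => a i - w j i, ⟨ν, hν0, ?_, fun i => ?_⟩, ?_⟩
    · simp [ν, Finset.sum_sub_distrib, h1]
    · rw [← hν, Nat.cast_sub (hle i)]
    · ext i
      have := hle i
      simp; omega
  let B := hfin.toFinset
  let b : Fin B.card ≃ B := B.equivFin.symm
  let g0 : (Fin s → ℕ) → Fin B.card → (Fin k → ℕ) := fun u c => ∑ j, u j • w j + (b c : Fin k → ℕ)
  have hAq : ∀ q a, a ∈ A (n0 + m * q) ↔ ∃ u c, ∑ i, u i = q ∧ g0 u c = a := by
    intro q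
    induction q with
    | zero =>
      intro a
      constructor
      · intro ha
        have hB : a ∈ B := by simpa [B] using ha
        refine ⟨0, b.symm ⟨a, hB⟩, by simp, by simp [g0]⟩
      · rintro ⟨u, c, hu, rfl⟩
        have hu0 : ∀ i, u i = 0 := by simpa using hu
        have hc : (b c : Fin k → ℕ) ∈ A n0 := hfin.mem_toFinset.1 (b c).2
        simpa [g0, hu0] using hc
    | succ q ih =>
      intro a
      rw [show n0 + m * (q + 1) = n0 + m * q + m by ring]
      constructor
      · intro ha
        obtain ⟨j, a', ha', rfl⟩ := hdown _ _ (by omega) ha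
        obtain ⟨u, c, hu, rfl⟩ := (ih a').1 ha'
        refine ⟨u + Pi.single j 1, c, ?_, ?_⟩
        · simp [Finset.sum_add_distrib, hu]
        · simp only [g0, Pi.add_apply, add_smul, Finset.sum_add_distrib]
          have : ∑ x, (Pi.single j 1 : Fin s → ℕ) x • w x = w j := by
            rw [Finset.sum_eq_single j] <;> simp +contextual
          rw [this]; abel
      · rintro ⟨u, c, hu, rfl⟩
        obtain ⟨j, hj⟩ : ∃ j, u j ≠ 0 := by
          by_contra! h
          simp [h] at hu
        obtain ⟨u', rfl⟩ : ∃ u', u = u' + Pi.single j 1 := ⟨u - Pi.single j 1, by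
          ext i
          by_cases h : i = j
          · subst h; simp; omega
          · simp [h]⟩
        have h2 : ∑ i, u' i = q := by
          simpa [Finset.sum_add_distrib] using hu
        have := hup _ _ j ((ih _).2 ⟨u', c, h2, rfl⟩)
        convert this using 1
        simp only [g0, Pi.add_apply, add_smul, Finset.sum_add_distrib]
        have : ∑ x, (Pi.single j 1 : Fin s → ℕ) x • w x = w j := by
          rw [Finset.sum_eq_single j] <;> simp +contextual
        rw [this]; abel
  refine EvPoly.congr (image_evPoly (fun u c => χ (g0 u c)) ?_) 0 fun q _ => ?_
  · intro u c u' c' d h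
    have h1 : ∀ u c, g0 (u + d) c = g0 u c + ∑ j, d j • w j := by
      intro u c
      simp only [g0, Pi.add_apply, add_smul, Finset.sum_add_distrib]
      abel
    rw [h1, h1]
    exact hχ _ _ _ _ h rfl
  · show _ = _
    rw [hA _ (by omega)]
    congr 2
    ext x
    constructor
    · rintro ⟨a, ha, rfl⟩
      obtain ⟨u, c, hu, h⟩ := (hAq q a).1 ha
      exact ⟨u, c, hu, by rw [h]⟩
    · rintro ⟨u, c, hu, rfl⟩
      exact ⟨_, (hAq q _).2 ⟨u, c, hu, rfl⟩, rfl⟩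

/-- Let `P` be a polytope in `ℝ^k` with vertices in `ℚ_{≥0}^k`, let
`m ∈ ℕ` be such that the vertices of `mP` lie in `ℕ₀^k`, and let `χ : ℕ₀^k → X` be an
additive coloring. Then for large `n` the number of colors `|χ(nP ∩ ℕ₀^k)|` is given by
a quasipolynomial with period `m`: there are `N` and polynomials `p_r`, `0 ≤ r < m`,
such that for `n ≥ N` with `n ≡ r (mod m)` the number of colors equals `p_r(n)`. -/
theorem number_of_colors_in_dilated_rational_polytope_eventually_quasipolynomial
    {k : ℕ} {X : Type*} (V : Finset (Fin k → ℝ)) (hVne : V.Nonempty)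
    (hV : ∀ v ∈ V, ∀ i, ∃ q : ℚ, 0 ≤ q ∧ v i = (q : ℝ))
    (m : ℕ) (hm : 0 < m)
    (hmV : ∀ v ∈ V, ∀ i, ∃ t : ℕ, (m : ℝ) * v i = (t : ℝ))
    (χ : (Fin k → ℕ) → X)
    (hχ : ∀ a b c d : Fin k → ℕ, χ a = χ c → χ b = χ d → χ (a + b) = χ (c + d)) :
    ∃ (N : ℕ) (p : Fin m → Polynomial ℝ), ∀ n : ℕ, N ≤ n →
      ((χ '' {a : Fin k → ℕ |
          (fun i => (a i : ℝ)) ∈ (n : ℝ) • convexHull ℝ (V : Set (Fin k → ℝ))}).ncard : ℝ)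
        = (p ⟨n % m, Nat.mod_lt n hm⟩).eval (n : ℝ) := by
  have key := fun r : Fin m => residue_evPoly V hVne m hm hmV χ hχ r
  choose p N hp using key
  refine ⟨m + m * V.card + m * ∑ r, N r, fun r => ((p r).map (algebraMap ℚ ℝ)).comp
    (Polynomial.C ((m : ℝ)⁻¹) * (Polynomial.X - Polynomial.C ((r + m * V.card : ℕ) : ℝ))),
    fun n hn => ?_⟩
  have hr : n % m < m := Nat.mod_lt n hm
  set r : Fin m := ⟨n % m, hr⟩ with hr_def
  have hm' : (m : ℝ) ≠ 0 := by exact_mod_cast hm.ne'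
  obtain ⟨q, hq, hnq⟩ : ∃ q, N r ≤ q ∧ n = r + m * V.card + m * q := by
    have h1 : m * (n / m) + n % m = n := Nat.div_add_mod n m
    have h2 : N r ≤ ∑ r, N r := Finset.single_le_sum (fun _ _ => Nat.zero_le _) (Finset.mem_univ r)
    have h3 : V.card + ∑ r, N r ≤ n / m := by
      rw [Nat.le_div_iff_mul_le hm, mul_comm, mul_add]
      omega
    refine ⟨n / m - V.card, by omega, ?_⟩
    obtain ⟨d, hd⟩ := Nat.exists_eq_add_of_le (show V.card ≤ n / m by omega)
    have h4 : (r : ℕ) = n % m := rfl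
    rw [hd] at h1 ⊢
    rw [h4, Nat.add_sub_cancel_left]
    rw [mul_add] at h1
    omega
  have h := hp r q hq
  simp only at h
  rw [← hnq] at h
  have h' := congrArg (fun x : ℚ => (x : ℝ)) h
  simp only [Rat.cast_natCast] at h'
  rw [h', Polynomial.eval_comp]
  have hx : Polynomial.eval (n : ℝ) (Polynomial.C ((m : ℝ)⁻¹) *
      (Polynomial.X - Polynomial.C ((r + m * V.card : ℕ) : ℝ))) = ((q : ℚ) : ℝ) := by
    have hnr : (n : ℝ) = ((r + m * V.card : ℕ) : ℝ) + m * q := by exact_mod_cast hnq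
    simp only [Polynomial.eval_mul, Polynomial.eval_sub, Polynomial.eval_C, Polynomial.eval_X]
    rw [hnr]
    field_simp
    simp
  rw [hx]
  exact (Polynomial.eval_map_apply (algebraMap ℚ ℝ) (q : ℚ)).symm
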